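/- arXiv:2211.14645 — 9 statements merged into one kernel-verified Lean document; each statement's English description precedes it below -/
import Mathlib

section
/- Let λ > 0 and ξ ≥ 1 be real numbers. For each natural number k define a_k = 2λ(k + 32ξ)/5 and A_k = λ(k(k + 1 + 64ξ)/(5ξ) + 200ξ). Then for every integer k ≥ 1 one has (8λ/9)·(ξ·A_{k−1} + a_k) ≥ a_k² ≥ (3λ/4)·(ξ·A_{k−1} + ξ·a_k). -/
/-!
Put `s = k + 32ξ`. Then `a_k = 2λs/5`, and `A_k` satisfies `ξ A_{k-1} + a_k = ξ A_k`, where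
`5ξ A_k = λ(s² + s - 24ξ² - 32ξ)`. Up to a positive multiple of `λ²`, the two bounds become the
quadratic inequalities `9s² ≤ 10(s² + s - 24ξ² - 32ξ)` and
`15(s² + s - 24ξ² - 32ξ + 2(ξ - 1)s) ≤ 16s²`, which both follow from `s ≥ 32ξ ≥ 0`.
-/

namespace Riemacon

variable {𝕜 : Type*} [Field 𝕜]

/-- The step size `a_k` of the accelerated algorithm. The index is a scalar, so that shifting it
by one involves no truncated subtraction. -/
def stepSize (lam xi t : 𝕜) : 𝕜 := 2 * lam * (t + 32 * xi) / 5

/-- The accumulated weight `A_k` of the accelerated algorithm, with a scalar index as in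
`stepSize`. -/
def weight (lam xi t : 𝕜) : 𝕜 := lam * (t * (t + 1 + 64 * xi) / (5 * xi) + 200 * xi)

variable {lam xi t s : 𝕜}

theorem mul_weight_eq [CharZero 𝕜] (hxi : xi ≠ 0) :
    xi * weight lam xi t =
      lam / 5 * ((t + 32 * xi) ^ 2 + (t + 32 * xi) - 24 * xi ^ 2 - 32 * xi) := by
  unfold weight
  field_simp
  ring

theorem mul_weight_sub_one_add_stepSize [CharZero 𝕜] (hxi : xi ≠ 0) :
    xi * weight lam xi (t - 1) + stepSize lam xi t = xi * weight lam xi t := by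
  rw [mul_weight_eq hxi, mul_weight_eq hxi, stepSize]
  ring

variable [LinearOrder 𝕜] [IsStrictOrderedRing 𝕜]

theorem nine_mul_sq_le (hxi : 0 ≤ xi) (hs : 32 * xi ≤ s) :
    9 * s ^ 2 ≤ 10 * (s ^ 2 + s - 24 * xi ^ 2 - 32 * xi) := by
  have hsq : (32 * xi) ^ 2 ≤ s ^ 2 := by gcongr
  linarith [sq_nonneg xi]

theorem le_sixteen_mul_sq (hxi : 0 ≤ xi) (hs : 32 * xi ≤ s) :
    15 * (s ^ 2 + s - 24 * xi ^ 2 - 32 * xi + 2 * (xi - 1) * s) ≤ 16 * s ^ 2 := by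
  have hs_nonneg : 0 ≤ s := by linarith
  have hsq : 32 * xi * s ≤ s ^ 2 := by
    rw [sq]
    gcongr
  linarith [sq_nonneg xi, mul_nonneg hxi hs_nonneg]

theorem stepSize_sq_le (hxi : 0 < xi) (ht : 0 ≤ t) :
    stepSize lam xi t ^ 2 ≤ 8 * lam / 9 * (xi * weight lam xi t) := by
  have hquad := nine_mul_sq_le hxi.le (le_add_of_nonneg_left ht)
  rw [mul_weight_eq hxi.ne', stepSize]
  linear_combination 4 / 225 * mul_le_mul_of_nonneg_left hquad (sq_nonneg lam)

theorem le_stepSize_sq (hxi : 0 < xi) (ht : 0 ≤ t) :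
    3 * lam / 4 * (xi * weight lam xi t + (xi - 1) * stepSize lam xi t) ≤
      stepSize lam xi t ^ 2 := by
  have hquad := le_sixteen_mul_sq hxi.le (le_add_of_nonneg_left ht)
  rw [mul_weight_eq hxi.ne', stepSize]
  linear_combination 1 / 100 * mul_le_mul_of_nonneg_left hquad (sq_nonneg lam)

end Riemacon

open Riemacon in
theorem stmt_0_general {𝕜 : Type*} [Field 𝕜] [LinearOrder 𝕜] [IsStrictOrderedRing 𝕜]
    (lam : 𝕜) {xi t : 𝕜} (hxi : 0 < xi) (ht : 0 ≤ t) :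
    stepSize lam xi t ^ 2 ≤
        8 * lam / 9 * (xi * weight lam xi (t - 1) + stepSize lam xi t) ∧
      3 * lam / 4 * (xi * weight lam xi (t - 1) + xi * stepSize lam xi t) ≤
        stepSize lam xi t ^ 2 := by
  have hrec := mul_weight_sub_one_add_stepSize (lam := lam) (t := t) hxi.ne'
  constructor
  · rw [hrec]
    exact stepSize_sq_le hxi ht
  · convert le_stepSize_sq hxi ht using 2
    linear_combination hrec

/-- Step-size parameter inequalities for the Riemacon accelerated algorithm:
with `a k = 2λ(k + 32ξ)/5` and `A k = λ(k(k+1+64ξ)/(5ξ) + 200ξ)`, for every `k ≥ 1`,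
`(8λ/9)(ξ A_{k-1} + a_k) ≥ a_k² ≥ (3λ/4)(ξ A_{k-1} + ξ a_k)`. -/
theorem stmt_0 (lam xi : ℝ) (hlam : 0 < lam) (hxi : 1 ≤ xi)
    (a A : ℕ → ℝ)
    (ha : ∀ k : ℕ, a k = 2 * lam * ((k : ℝ) + 32 * xi) / 5)
    (hA : ∀ k : ℕ, A k = lam * ((k : ℝ) * ((k : ℝ) + 1 + 64 * xi) / (5 * xi) + 200 * xi))
    (k : ℕ) (hk : 1 ≤ k) :
    (8 * lam / 9) * (xi * A (k - 1) + a k) ≥ (a k) ^ 2 ∧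
      (a k) ^ 2 ≥ (3 * lam / 4) * (xi * A (k - 1) + xi * a k) := by
  simpa only [ha, hA, Nat.cast_pred hk, Riemacon.stepSize, Riemacon.weight] using
    stmt_0_general lam (zero_lt_one.trans_le hxi) k.cast_nonneg
end

section
/- Let E be a real inner product space, X ⊆ E a convex set, and f : E → ℝ convex on X. Fix x ∈ E and λ > 0, and define h : E → ℝ by h(y) = f(y) + ‖x − y‖²/(2λ). Suppose x* minimizes f over X and y* minimizes h over X. Then ‖x − y*‖ ≤ ‖x − x*‖ and ‖y* − x*‖ ≤ ‖x − x*‖. -/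
/-!
A minimizer `p` of `f + φ ‖x - ·‖`, with `φ` strictly increasing, is a point of the sublevel set
`{y ∈ X | f y ≤ f p}` nearest to `x`: trading `p` for a point with no larger `f` cannot lower the
penalty. For quasiconvex `f` this set is convex, so if `f q ≤ f p`, the triangle `x, p, q` has a
non-acute angle at `p`; the side `x q` opposite to it dominates `p q`.
-/

section IsMinOn

variable {α β : Type*} [Preorder β] {s : Set α} {a : α}

theorem isMinOn_sublevel_of_isMinOn_add [AddCommMonoid β] [IsOrderedCancelAddMonoid β]
    {f g : α → β} (h : IsMinOn (fun y => f y + g y) s a) :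
    IsMinOn g {y ∈ s | f y ≤ f a} a := by
  rintro y ⟨hys, hfy⟩
  have hsum : f a + g a ≤ f a + g y := (h hys).trans (add_le_add_left hfy (g y))
  exact le_of_add_le_add_left hsum

theorem isMinOn_of_isMinOn_strictMonoOn_comp {γ : Type*} [LinearOrder γ] {φ : γ → β} {t : Set γ}
    (hφ : StrictMonoOn φ t) {g : α → γ} (hg : Set.MapsTo g s t) (ha : a ∈ s)
    (h : IsMinOn (fun y => φ (g y)) s a) : IsMinOn g s a :=
  fun _ hy => (hφ.le_iff_le (hg ha) (hg hy)).1 (h hy)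

end IsMinOn

theorem norm_le_norm_sub_of_inner_nonpos {E : Type*} [SeminormedAddCommGroup E]
    [InnerProductSpace ℝ E] {u v : E} (h : inner ℝ u v ≤ 0) : ‖v‖ ≤ ‖u - v‖ := by
  refine le_of_sq_le_sq ?_ (norm_nonneg _)
  linarith [norm_sub_sq_real u v, sq_nonneg ‖u‖]

theorem norm_sub_le_of_isMinOn_norm_sub {E : Type*} [NormedAddCommGroup E]
    [InnerProductSpace ℝ E] {K : Set E} (hK : Convex ℝ K) {x p q : E} (hp : p ∈ K) (hq : q ∈ K)
    (hmin : IsMinOn (fun y => ‖x - y‖) K p) : ‖p - q‖ ≤ ‖x - q‖ := by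
  have hangle : inner ℝ (x - p) (q - p) ≤ 0 :=
    (norm_eq_iInf_iff_real_inner_le_zero hK hp).1 (hmin.iInf_eq hp).symm q hq
  simpa only [sub_sub_sub_cancel_right, norm_sub_rev q p] using
    norm_le_norm_sub_of_inner_nonpos hangle

theorem convexOn_iff_forall_mem_Icc {𝕜 E β : Type*} [Ring 𝕜] [PartialOrder 𝕜] [IsOrderedAddMonoid 𝕜]
    [AddCommMonoid E] [SMul 𝕜 E] [AddCommMonoid β] [PartialOrder β] [SMul 𝕜 β]
    {s : Set E} {f : E → β} :
    ConvexOn 𝕜 s f ↔ Convex 𝕜 s ∧ ∀ u ∈ s, ∀ v ∈ s, ∀ t ∈ Set.Icc (0 : 𝕜) 1,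
      f (t • u + (1 - t) • v) ≤ t • f u + (1 - t) • f v := by
  refine and_congr_right fun _ =>
    ⟨fun hf u hu v hv t ht => ?_, fun hf u hu v hv a b ha hb hab => ?_⟩
  · exact hf hu hv ht.1 (sub_nonneg.2 ht.2) (add_sub_cancel t 1)
  · obtain rfl : b = 1 - a := eq_sub_of_add_eq' hab
    exact hf u hu v hv a ⟨ha, sub_nonneg.1 hb⟩

theorem strictMonoOn_pow_div {𝕜 : Type*} [Field 𝕜] [LinearOrder 𝕜] [IsStrictOrderedRing 𝕜]
    {n : ℕ} (hn : n ≠ 0) {c : 𝕜} (hc : 0 < c) :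
    StrictMonoOn (fun r : 𝕜 => r ^ n / c) (Set.Ici 0) :=
  fun _ ha _ hb hab => div_lt_div_of_pos_right (pow_left_strictMonoOn₀ hn ha hb hab) hc

theorem stmt_3_general {E β : Type*} [NormedAddCommGroup E] [InnerProductSpace ℝ E]
    [AddCommMonoid β] [Preorder β] [IsOrderedCancelAddMonoid β]
    {X : Set E} {f : E → β} (hf : QuasiconvexOn ℝ X f)
    {φ : ℝ → β} (hφ : StrictMonoOn φ (Set.Ici 0)) {x p q : E} (hp : p ∈ X)
    (hmin : IsMinOn (fun y => f y + φ ‖x - y‖) X p) (hq : q ∈ X) (hqp : f q ≤ f p) :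
    ‖x - p‖ ≤ ‖x - q‖ ∧ ‖p - q‖ ≤ ‖x - q‖ := by
  have hnearest : IsMinOn (fun y => ‖x - y‖) {y ∈ X | f y ≤ f p} p :=
    isMinOn_of_isMinOn_strictMonoOn_comp hφ (fun y _ => norm_nonneg (x - y)) ⟨hp, le_rfl⟩
      (isMinOn_sublevel_of_isMinOn_add hmin)
  exact ⟨hnearest ⟨hq, hqp⟩,
    norm_sub_le_of_isMinOn_norm_sub (hf (f p)) ⟨hp, le_rfl⟩ ⟨hq, hqp⟩ hnearest⟩

/-- Euclidean instance of the lemma on where the constrained proximal point goes: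
if `x*` minimizes `f` over the convex set `X` and `y*` minimizes
`h(y) = f(y) + ‖x − y‖²/(2λ)` over `X`, then `‖x − y*‖ ≤ ‖x − x*‖` and
`‖y* − x*‖ ≤ ‖x − x*‖`. -/
theorem stmt_3 {E : Type*} [NormedAddCommGroup E] [InnerProductSpace ℝ E]
    (X : Set E) (hX : Convex ℝ X) (f : E → ℝ)
    (hf : ∀ u ∈ X, ∀ v ∈ X, ∀ t ∈ Set.Icc (0 : ℝ) 1,
      f (t • u + (1 - t) • v) ≤ t * f u + (1 - t) * f v)
    (x : E) (lam : ℝ) (hlam : 0 < lam)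
    (h : E → ℝ) (hh : ∀ y, h y = f y + ‖x - y‖ ^ 2 / (2 * lam))
    (xstar : E) (hxs : xstar ∈ X) (hxsmin : ∀ y ∈ X, f xstar ≤ f y)
    (ystar : E) (hys : ystar ∈ X) (hysmin : ∀ y ∈ X, h ystar ≤ h y) :
    ‖x - ystar‖ ≤ ‖x - xstar‖ ∧ ‖ystar - xstar‖ ≤ ‖x - xstar‖ := by
  obtain rfl : h = fun y => f y + ‖x - y‖ ^ 2 / (2 * lam) := funext hh
  exact stmt_3_general (convexOn_iff_forall_mem_Icc.2 ⟨hX, hf⟩).quasiconvexOn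
    (strictMonoOn_pow_div two_ne_zero (by positivity)) hys hysmin hxs (hxsmin ystar hys)
end

section
/- Let E be a real inner product space, X ⊆ E a convex set, L' > 0, and h : E → ℝ a differentiable function that is convex on X and L'-smooth on X. Let x ∈ E, let x' be a metric projection of x onto X, set x⁺ = x' − (1/L')·∇h(x'), and let p₀ be a metric projection of x⁺ onto X. Then for every p ∈ X, h(p₀) − h(p) ≤ (L'/2)·‖x' − p‖² ≤ (L'/2)·‖x − p‖². -/
open RealInnerProductSpace

/-!
Completing the square shows that `p₀` minimizes over `X` the quadratic model
`y ↦ h x' + ⟪∇h x', y - x'⟫ + (L' / 2) * ‖y - x'‖ ^ 2`. Smoothness bounds `h p₀` by the value of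
the model at `p₀`, hence by its value at `p`, and there convexity bounds the linear part of the
model by `h p`. The second inequality holds because the angle at `x'` between `x - x'` and `p - x'`
is not acute.
-/

lemma convexOn_of_forall_mem_Icc {𝕜 E β : Type*} [Ring 𝕜] [PartialOrder 𝕜] [IsOrderedAddMonoid 𝕜]
    [AddCommMonoid E] [SMul 𝕜 E] [AddCommMonoid β] [PartialOrder β] [SMul 𝕜 β]
    {s : Set E} {f : E → β} (hs : Convex 𝕜 s)
    (hf : ∀ u ∈ s, ∀ v ∈ s, ∀ t ∈ Set.Icc (0 : 𝕜) 1,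
      f (t • u + (1 - t) • v) ≤ t • f u + (1 - t) • f v) :
    ConvexOn 𝕜 s f := by
  refine ⟨hs, fun u hu v hv a b ha hb hab => ?_⟩
  obtain rfl : b = 1 - a := eq_sub_of_add_eq' hab
  exact hf u hu v hv a ⟨ha, sub_nonneg.1 hb⟩

lemma add_fderivWithin_sub_le_of_convexOn {E : Type*} [NormedAddCommGroup E] [NormedSpace ℝ E]
    {s : Set E} {f : E → ℝ} {f' : E →L[ℝ] ℝ} {x y : E} (hf : ConvexOn ℝ s f)
    (hf' : HasFDerivWithinAt f f' s x) (hx : x ∈ s) (hy : y ∈ s) :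
    f x + f' (y - x) ≤ f y := by
  let γ : ℝ →ᵃ[ℝ] E := AffineMap.lineMap x y
  have hγ₀ : γ 0 = x := AffineMap.lineMap_apply_zero x y
  have hγ₁ : γ 1 = y := AffineMap.lineMap_apply_one x y
  have hderiv : HasDerivWithinAt (f ∘ γ) (f' (y - x)) (γ ⁻¹' s) 0 :=
    hf'.comp_hasDerivWithinAt_of_eq 0 AffineMap.hasDerivWithinAt_lineMap
      (Set.mapsTo_preimage γ s) hγ₀.symm
  have hslope : f' (y - x) ≤ slope (f ∘ γ) 0 1 :=
    (hf.comp_affineMap γ).le_slope_of_hasDerivWithinAt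
      (by rwa [Set.mem_preimage, hγ₀]) (by rwa [Set.mem_preimage, hγ₁]) one_pos hderiv
  simp only [slope_def_field, Function.comp_apply, hγ₀, hγ₁, sub_zero, div_one] at hslope
  linarith

section MetricProjection

variable {E : Type*} [NormedAddCommGroup E] [InnerProductSpace ℝ E] {s : Set E}

lemma real_inner_sub_sub_nonpos_of_isMinOn_norm_sub (hs : Convex ℝ s) {x x' p : E} (hx' : x' ∈ s)
    (hmin : IsMinOn (fun y => ‖x - y‖) s x') (hp : p ∈ s) : ⟪x - x', p - x'⟫ ≤ 0 :=
  (norm_eq_iInf_iff_real_inner_le_zero hs hx').1 (hmin.iInf_eq hx').symm p hp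

lemma sq_norm_sub_add_sq_norm_sub_le_of_isMinOn_norm_sub (hs : Convex ℝ s) {x x' p : E}
    (hx' : x' ∈ s) (hmin : IsMinOn (fun y => ‖x - y‖) s x') (hp : p ∈ s) :
    ‖x - x'‖ ^ 2 + ‖x' - p‖ ^ 2 ≤ ‖x - p‖ ^ 2 := by
  have hinner := real_inner_sub_sub_nonpos_of_isMinOn_norm_sub hs hx' hmin hp
  have hexpand := norm_sub_sq_real (x - x') (p - x')
  rw [sub_sub_sub_cancel_right, norm_sub_rev p x'] at hexpand
  linarith

end MetricProjection

section GradientStep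

variable {E : Type*} [NormedAddCommGroup E] [InnerProductSpace ℝ E] {s : Set E} {L : ℝ}

lemma half_mul_sq_norm_sub_smul_sub (hL : L ≠ 0) (a g y : E) :
    L / 2 * ‖a - (1 / L) • g - y‖ ^ 2 =
      ⟪g, y - a⟫ + L / 2 * ‖y - a‖ ^ 2 + L / 2 * ‖(1 / L) • g‖ ^ 2 := by
  have hneg : a - (1 / L) • g - y = -((y - a) + (1 / L) • g) := by abel
  rw [hneg, norm_neg, norm_add_sq_real, real_inner_smul_right, real_inner_comm]
  field_simp
  ring

lemma isMinOn_inner_add_half_mul_sq_norm (hL : 0 < L) {a g q : E}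
    (hmin : IsMinOn (fun y => ‖a - (1 / L) • g - y‖) s q) :
    IsMinOn (fun y => ⟪g, y - a⟫ + L / 2 * ‖y - a‖ ^ 2) s q := by
  refine isMinOn_iff.2 fun y hy => ?_
  have hdist : L / 2 * ‖a - (1 / L) • g - q‖ ^ 2 ≤ L / 2 * ‖a - (1 / L) • g - y‖ ^ 2 := by
    gcongr
    exact isMinOn_iff.1 hmin y hy
  rw [half_mul_sq_norm_sub_smul_sub hL.ne', half_mul_sq_norm_sub_smul_sub hL.ne'] at hdist
  exact le_of_add_le_add_right hdist

lemma sub_le_half_mul_sq_norm_of_projected_gradient_step (hL : 0 < L) {f : E → ℝ} {a g p q : E}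
    (hsub : f a + ⟪g, p - a⟫ ≤ f p)
    (hdescent : f q ≤ f a + ⟪g, q - a⟫ + L / 2 * ‖q - a‖ ^ 2)
    (hmin : IsMinOn (fun y => ‖a - (1 / L) • g - y‖) s q) (hp : p ∈ s) :
    f q - f p ≤ L / 2 * ‖a - p‖ ^ 2 := by
  have hmodel : ⟪g, q - a⟫ + L / 2 * ‖q - a‖ ^ 2 ≤ ⟪g, p - a⟫ + L / 2 * ‖p - a‖ ^ 2 :=
    isMinOn_iff.1 (isMinOn_inner_add_half_mul_sq_norm hL hmin) p hp
  rw [norm_sub_rev a p]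
  linarith

end GradientStep

theorem stmt_4_general {E : Type*} [NormedAddCommGroup E] [InnerProductSpace ℝ E]
    {X : Set E} (hX : Convex ℝ X) {L' : ℝ} (hL' : 0 < L') {h : E → ℝ} {x x' g p₀ p : E}
    (hx'X : x' ∈ X) (hx'proj : IsMinOn (fun y => ‖x - y‖) X x')
    (hsubgrad : ∀ y ∈ X, h x' + ⟪g, y - x'⟫ ≤ h y)
    (hdescent : h p₀ ≤ h x' + ⟪g, p₀ - x'⟫ + L' / 2 * ‖p₀ - x'‖ ^ 2)
    (hp₀proj : IsMinOn (fun y => ‖x' - (1 / L') • g - y‖) X p₀) (hp : p ∈ X) :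
    h p₀ - h p ≤ L' / 2 * ‖x' - p‖ ^ 2 ∧ L' / 2 * ‖x' - p‖ ^ 2 ≤ L' / 2 * ‖x - p‖ ^ 2 := by
  have hpythag := sq_norm_sub_add_sq_norm_sub_le_of_isMinOn_norm_sub hX hx'X hx'proj hp
  have hcloser : ‖x' - p‖ ^ 2 ≤ ‖x - p‖ ^ 2 := le_of_add_le_of_nonneg_right hpythag (sq_nonneg _)
  exact ⟨sub_le_half_mul_sq_norm_of_projected_gradient_step hL' (hsubgrad p hp) hdescent hp₀proj hp,
    mul_le_mul_of_nonneg_left hcloser (half_pos hL').le⟩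

/-- Euclidean instance of the warm-start lemma: if `h` is convex and `L'`-smooth on the
convex set `X`, `x'` is a metric projection of `x` onto `X`,
`x⁺ = x' − (1/L')∇h(x')`, and `p₀` is a metric projection of `x⁺` onto `X`, then for all
`p ∈ X`, `h(p₀) − h(p) ≤ (L'/2)‖x' − p‖² ≤ (L'/2)‖x − p‖²`.
Here `h' y` is the gradient of `h` at `y`, expressed via the Fréchet derivative
`v ↦ ⟪h' y, v⟫`. -/
theorem stmt_4 {E : Type*} [NormedAddCommGroup E] [InnerProductSpace ℝ E]
    (X : Set E) (hX : Convex ℝ X) (L' : ℝ) (hL' : 0 < L')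
    (h : E → ℝ) (h' : E → E) (hdiff : ∀ y, HasFDerivAt h (innerSL ℝ (h' y)) y)
    (hconv : ∀ u ∈ X, ∀ v ∈ X, ∀ t ∈ Set.Icc (0 : ℝ) 1,
      h (t • u + (1 - t) • v) ≤ t * h u + (1 - t) * h v)
    (hsmooth : ∀ u ∈ X, ∀ v ∈ X, h v ≤ h u + ⟪h' u, v - u⟫ + (L' / 2) * ‖v - u‖ ^ 2)
    (x x' : E) (hx'X : x' ∈ X) (hx'proj : ∀ y ∈ X, ‖x - x'‖ ≤ ‖x - y‖)
    (xplus : E) (hxplus : xplus = x' - (1 / L') • h' x')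
    (p₀ : E) (hp₀X : p₀ ∈ X) (hp₀proj : ∀ y ∈ X, ‖xplus - p₀‖ ≤ ‖xplus - y‖)
    (p : E) (hp : p ∈ X) :
    h p₀ - h p ≤ (L' / 2) * ‖x' - p‖ ^ 2 ∧
      (L' / 2) * ‖x' - p‖ ^ 2 ≤ (L' / 2) * ‖x - p‖ ^ 2 := by
  subst hxplus
  have hsubgrad : ∀ y ∈ X, h x' + ⟪h' x', y - x'⟫ ≤ h y := fun _ =>
    add_fderivWithin_sub_le_of_convexOn (convexOn_of_forall_mem_Icc hX hconv)
      (hdiff x').hasFDerivWithinAt hx'X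
  exact stmt_4_general hX hL' hx'X (isMinOn_iff.2 hx'proj) hsubgrad (hsmooth x' hx'X p₀ hp₀X)
    (isMinOn_iff.2 hp₀proj) hp
end

section
/- Let E be a real inner product space, X ⊆ E a convex set, and f : E → ℝ differentiable such that for all u, v ∈ X: f(v) ≥ f(u) + ⟨∇f(u), v − u⟩ + (μ/2)‖v − u‖² and f(v) ≤ f(u) + ⟨∇f(u), v − u⟩ + (L/2)‖v − u‖², where 0 < μ ≤ L. Suppose x* minimizes f over X. Let x ∈ X and let x⁺ minimize the model y ↦ ⟨∇f(x), y − x⟩ + (L/2)‖y − x‖² over X. Then f(x⁺) − f(x*) ≤ (1 − μ/(2L))·(f(x) − f(x*)). -/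
/-!
Linear terms scale by `t` and quadratic terms by `t ^ 2` along a segment issuing from `x`, so the
model of curvature `L` at `x + t • (y - x)` is `t` times the model of curvature `L * t` at `y`.
For `t = μ / L` the latter is exactly the lower model provided by `μ`-strong convexity, whence
`f x⁺ ≤ f x + t * (f y - f x)` for every `y ∈ X`. For `y = x*` this is contraction by `1 - μ / L`,
and the factor `1 - μ / (2 * L)` follows because `f x - f x*` is nonnegative.
-/

open RealInnerProductSpace

section QuadraticModel

variable {E : Type*} [SeminormedAddCommGroup E] [NormedSpace ℝ E] {ℓ : StrongDual ℝ E}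
  {X : Set E} {x y z : E}

/-- The increment, relative to the base point `x`, of the quadratic model with slope `ℓ` and
curvature `c`. The value at the base point is omitted, so that bounds on a function `f` compare `f`
with `f x + quadraticModel ℓ c x`. -/
noncomputable def quadraticModel (ℓ : StrongDual ℝ E) (c : ℝ) (x y : E) : ℝ :=
  ℓ (y - x) + c / 2 * ‖y - x‖ ^ 2

lemma quadraticModel_add_smul_sub (ℓ : StrongDual ℝ E) (c t : ℝ) (x y : E) :
    quadraticModel ℓ c x (x + t • (y - x)) = t * quadraticModel ℓ (c * t) x y := by
  simp only [quadraticModel, add_sub_cancel_left, map_smul, smul_eq_mul, norm_smul, mul_pow,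
    Real.norm_eq_abs, sq_abs]
  ring

lemma quadraticModel_le_mul_of_isMinOn {c t : ℝ} (hX : StarConvex ℝ x X)
    (hz : IsMinOn (quadraticModel ℓ c x) X z) (hy : y ∈ X) (ht₀ : 0 ≤ t) (ht₁ : t ≤ 1) :
    quadraticModel ℓ c x z ≤ t * quadraticModel ℓ (c * t) x y :=
  quadraticModel_add_smul_sub ℓ c t x y ▸
    isMinOn_iff.1 hz _ (hX.add_smul_sub_mem hy ht₀ ht₁)

theorem stmt_5_general {f : E → ℝ} {μ L : ℝ} (hX : StarConvex ℝ x X) (_hℓ : HasFDerivAt f ℓ x)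
    (hμ : 0 ≤ μ) (hL : 0 < L) (hμL : μ ≤ L) (hy : y ∈ X)
    (hlower : f x + ℓ (y - x) + μ / 2 * ‖y - x‖ ^ 2 ≤ f y)
    (hupper : f z ≤ f x + ℓ (z - x) + L / 2 * ‖z - x‖ ^ 2)
    (hz : IsMinOn (quadraticModel ℓ L x) X z) :
    f z - f y ≤ (1 - μ / L) * (f x - f y) := by
  rw [add_assoc] at hlower hupper
  have hmodel : quadraticModel ℓ L x z ≤ μ / L * quadraticModel ℓ μ x y := by
    simpa only [mul_div_cancel₀ μ hL.ne'] using
      quadraticModel_le_mul_of_isMinOn hX hz hy (div_nonneg hμ hL.le) ((div_le_one hL).2 hμL)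
  calc
    f z - f y ≤ f x + quadraticModel ℓ L x z - f y := by gcongr; exact hupper
    _ ≤ f x + μ / L * quadraticModel ℓ μ x y - f y := by gcongr
    _ ≤ f x + μ / L * (f y - f x) - f y := by gcongr; exact le_sub_iff_add_le'.2 hlower
    _ = (1 - μ / L) * (f x - f y) := by ring

end QuadraticModel

/-- Euclidean instance of the linear convergence of the model-minimization subroutine:
if `f` is `μ`-strongly convex and `L`-smooth on the convex set `X` (`0 < μ ≤ L`),
`x*` minimizes `f` over `X`, and `x⁺` minimizes the model
`y ↦ ⟪∇f(x), y − x⟫ + (L/2)‖y − x‖²` over `X`, then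
`f(x⁺) − f(x*) ≤ (1 − μ/(2L))(f(x) − f(x*))`. -/
theorem stmt_5 {E : Type*} [NormedAddCommGroup E] [InnerProductSpace ℝ E]
    (X : Set E) (hX : Convex ℝ X)
    (f : E → ℝ) (f' : E → E) (hdiff : ∀ y, HasFDerivAt f (innerSL ℝ (f' y)) y)
    (μ L : ℝ) (hμ : 0 < μ) (hμL : μ ≤ L)
    (hsc : ∀ u ∈ X, ∀ v ∈ X, f v ≥ f u + ⟪f' u, v - u⟫ + (μ / 2) * ‖v - u‖ ^ 2)
    (hsm : ∀ u ∈ X, ∀ v ∈ X, f v ≤ f u + ⟪f' u, v - u⟫ + (L / 2) * ‖v - u‖ ^ 2)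
    (xstar : E) (hxs : xstar ∈ X) (hxsmin : ∀ y ∈ X, f xstar ≤ f y)
    (x : E) (hx : x ∈ X)
    (xplus : E) (hxp : xplus ∈ X)
    (hxpmin : ∀ y ∈ X, ⟪f' x, xplus - x⟫ + (L / 2) * ‖xplus - x‖ ^ 2 ≤
      ⟪f' x, y - x⟫ + (L / 2) * ‖y - x‖ ^ 2) :
    f xplus - f xstar ≤ (1 - μ / (2 * L)) * (f x - f xstar) := by
  have hL : 0 < L := hμ.trans_le hμL
  have hgap : 0 ≤ f x - f xstar := sub_nonneg.2 (hxsmin x hx)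
  calc
    f xplus - f xstar ≤ (1 - μ / L) * (f x - f xstar) :=
      stmt_5_general (hX.starConvex hx) (hdiff x) hμ.le hL hμL hxs (hsc x hx xstar hxs)
        (hsm x hx xplus hxp) (isMinOn_iff.2 hxpmin)
    _ ≤ (1 - μ / (2 * L)) * (f x - f xstar) := by gcongr; linarith
end

section
/- Let E be a real inner product space, X ⊆ E a convex set, and f : E → ℝ convex on X. Fix x̂ ∈ E and λ > 0, define h : E → ℝ by h(y) = f(y) + ‖x̂ − y‖²/(2λ), and suppose y* minimizes h over X. For y ∈ X set v = (x̂ − y)/λ. Then for every point p ∈ X: f(p) ≥ f(y) + ⟨v, p − x̂⟩ + (λ/2)‖v‖² − err(p), where err(p) = −(1/λ)·⟨y − y*, p − x̂⟩ + (h(y) − h(y*)). -/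
open RealInnerProductSpace

open Filter Set Topology

/-!
Along each segment ending at `y*`, the function `h` inherits strong convexity with modulus `1/λ`
from the squared distance, so it grows quadratically away from its minimizer:
`h p ≥ h y* + ‖p - y*‖² / (2λ)`. Expanding
`‖p - y*‖²` around `x̂` turns this into the bound
`f p ≥ f y* + ‖x̂ - y*‖² / λ + ⟪x̂ - y*, p - x̂⟫ / λ`. In the claimed bound all occurrences of `y`
cancel, leaving the same right-hand side with `‖x̂ - y*‖² / (2λ)` in place of `‖x̂ - y*‖² / λ`.
-/

lemma add_le_of_isMinOn_of_starConvex {E : Type*} [AddCommMonoid E] [SMul ℝ E]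
    {X : Set E} {g : E → ℝ} {p q : E} {c : ℝ} (hX : StarConvex ℝ q X) (hmin : IsMinOn g X q)
    (hp : p ∈ X)
    (hg : ∀ t ∈ Icc (0 : ℝ) 1,
      g (t • p + (1 - t) • q) ≤ t * g p + (1 - t) * g q - t * (1 - t) * c) :
    g q + c ≤ g p := by
  have hsegment : ∀ t ∈ Ioc (0 : ℝ) 1, (1 - t) * c ≤ g p - g q := by
    rintro t ⟨ht0, ht1⟩
    have hmem : t • p + (1 - t) • q ∈ X :=
      add_comm (t • p) _ ▸ hX hp (sub_nonneg.2 ht1) ht0.le (sub_add_cancel 1 t)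
    have hle := (isMinOn_iff.1 hmin _ hmem).trans (hg t ⟨ht0.le, ht1⟩)
    refine le_of_mul_le_mul_left ?_ ht0
    linarith
  have hlim : Tendsto (fun t : ℝ => (1 - t) * c) (𝓝[>] 0) (𝓝 c) := by
    have hcont : Continuous fun t : ℝ => (1 - t) * c := by fun_prop
    simpa only [sub_zero, one_mul] using (hcont.tendsto 0).mono_left nhdsWithin_le_nhds
  have hc : c ≤ g p - g q :=
    le_of_tendsto hlim (eventually_of_mem (Ioc_mem_nhdsGT one_pos) hsegment)
  linarith

section SemiInner

variable {E : Type*} [SeminormedAddCommGroup E] [InnerProductSpace ℝ E]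

lemma norm_sub_convex_combo_sq (x p q : E) (t : ℝ) :
    ‖x - (t • p + (1 - t) • q)‖ ^ 2 =
      t * ‖x - p‖ ^ 2 + (1 - t) * ‖x - q‖ ^ 2 - t * (1 - t) * ‖p - q‖ ^ 2 := by
  have hcombo : x - (t • p + (1 - t) • q) = (x - q) - t • (p - q) := by module
  have hxp : x - p = (x - q) - (p - q) := by abel
  rw [hcombo, hxp, norm_sub_sq_real, norm_sub_sq_real (x - q) (p - q), real_inner_smul_right,
    norm_smul, mul_pow, Real.norm_eq_abs, sq_abs]
  ring

variable {X : Set E} {f : E → ℝ} {x p q : E} {lam : ℝ}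

lemma prox_three_point_le (hX : StarConvex ℝ q X)
    (hf : ∀ u ∈ X, ∀ t ∈ Icc (0 : ℝ) 1, f (t • u + (1 - t) • q) ≤ t * f u + (1 - t) * f q)
    (hmin : IsMinOn (fun y => f y + ‖x - y‖ ^ 2 / (2 * lam)) X q) (hp : p ∈ X) :
    f q + ‖x - q‖ ^ 2 / (2 * lam) + ‖p - q‖ ^ 2 / (2 * lam) ≤ f p + ‖x - p‖ ^ 2 / (2 * lam) := by
  refine add_le_of_isMinOn_of_starConvex hX hmin hp fun t ht => ?_
  calc f (t • p + (1 - t) • q) + ‖x - (t • p + (1 - t) • q)‖ ^ 2 / (2 * lam)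
      ≤ t * f p + (1 - t) * f q + ‖x - (t • p + (1 - t) • q)‖ ^ 2 / (2 * lam) := by
        gcongr
        exact hf p hp t ht
    _ = t * (f p + ‖x - p‖ ^ 2 / (2 * lam)) + (1 - t) * (f q + ‖x - q‖ ^ 2 / (2 * lam)) -
          t * (1 - t) * (‖p - q‖ ^ 2 / (2 * lam)) := by
        rw [norm_sub_convex_combo_sq]
        ring

lemma prox_lower_bound (hX : StarConvex ℝ q X)
    (hf : ∀ u ∈ X, ∀ t ∈ Icc (0 : ℝ) 1, f (t • u + (1 - t) • q) ≤ t * f u + (1 - t) * f q)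
    (hmin : IsMinOn (fun y => f y + ‖x - y‖ ^ 2 / (2 * lam)) X q) (hp : p ∈ X) :
    f q + ‖x - q‖ ^ 2 / lam + ⟪x - q, p - x⟫ / lam ≤ f p := by
  have hexpand : ‖p - q‖ ^ 2 = ‖x - q‖ ^ 2 + 2 * ⟪x - q, p - x⟫ + ‖x - p‖ ^ 2 := by
    rw [norm_sub_rev x p, ← norm_add_sq_real, sub_add_sub_comm, add_comm x p,
      add_sub_add_right_eq_sub]
  calc f q + ‖x - q‖ ^ 2 / lam + ⟪x - q, p - x⟫ / lam
      = f q + ‖x - q‖ ^ 2 / (2 * lam) + ‖p - q‖ ^ 2 / (2 * lam) - ‖x - p‖ ^ 2 / (2 * lam) := by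
        rw [hexpand]
        ring
    _ ≤ f p := sub_le_iff_le_add.2 (prox_three_point_le hX hf hmin hp)

theorem stmt_6_general (hX : StarConvex ℝ q X)
    (hf : ∀ u ∈ X, ∀ t ∈ Icc (0 : ℝ) 1, f (t • u + (1 - t) • q) ≤ t * f u + (1 - t) * f q)
    (hlam : 0 < lam) {h : E → ℝ} (hh : ∀ y, h y = f y + ‖x - y‖ ^ 2 / (2 * lam))
    (hmin : IsMinOn h X q) {y v : E} (hv : v = (1 / lam) • (x - y)) {err : E → ℝ}
    (herr : ∀ p, err p = -(1 / lam) * ⟪y - q, p - x⟫ + (h y - h q)) (hp : p ∈ X) :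
    f p ≥ f y + ⟪v, p - x⟫ + (lam / 2) * ‖v‖ ^ 2 - err p := by
  have hnorm : lam / 2 * ‖v‖ ^ 2 = ‖x - y‖ ^ 2 / (2 * lam) := by
    rw [hv, norm_smul, mul_pow, Real.norm_eq_abs, sq_abs]
    field_simp
  have hinner : ⟪v, p - x⟫ + 1 / lam * ⟪y - q, p - x⟫ = ⟪x - q, p - x⟫ / lam := by
    rw [hv, real_inner_smul_left, ← mul_add, ← inner_add_left, sub_add_sub_cancel,
      one_div_mul_eq_div]
  calc f y + ⟪v, p - x⟫ + lam / 2 * ‖v‖ ^ 2 - err p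
      = f q + ‖x - q‖ ^ 2 / (2 * lam) + ⟪x - q, p - x⟫ / lam := by
        rw [herr, hh, hh, hnorm, ← hinner]
        ring
    _ ≤ f q + ‖x - q‖ ^ 2 / lam + ⟪x - q, p - x⟫ / lam := by
        gcongr
        linarith
    _ ≤ f p := prox_lower_bound hX hf (funext hh ▸ hmin) hp

end SemiInner

/-- Euclidean instance of the approximate-subgradient lower bound from an approximate
proximal point: with `h(y) = f(y) + ‖x̂ − y‖²/(2λ)` minimized over the convex set `X`
at `y*`, for `y ∈ X` and `v = (x̂ − y)/λ`, every `p ∈ X` satisfies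
`f(p) ≥ f(y) + ⟪v, p − x̂⟫ + (λ/2)‖v‖² − err(p)` where
`err(p) = −(1/λ)⟪y − y*, p − x̂⟫ + (h(y) − h(y*))`. Here `xh` stands for `x̂`. -/
theorem stmt_6 {E : Type*} [NormedAddCommGroup E] [InnerProductSpace ℝ E]
    (X : Set E) (hX : Convex ℝ X) (f : E → ℝ)
    (hf : ∀ u ∈ X, ∀ v ∈ X, ∀ t ∈ Set.Icc (0 : ℝ) 1,
      f (t • u + (1 - t) • v) ≤ t * f u + (1 - t) * f v)
    (xh : E) (lam : ℝ) (hlam : 0 < lam)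
    (h : E → ℝ) (hh : ∀ y, h y = f y + ‖xh - y‖ ^ 2 / (2 * lam))
    (ystar : E) (hys : ystar ∈ X) (hysmin : ∀ y ∈ X, h ystar ≤ h y)
    (y : E) (hy : y ∈ X)
    (v : E) (hv : v = (1 / lam) • (xh - y))
    (err : E → ℝ)
    (herr : ∀ p, err p = -(1 / lam) * ⟪y - ystar, p - xh⟫ + (h y - h ystar))
    (p : E) (hp : p ∈ X) :
    f p ≥ f y + ⟪v, p - xh⟫ + (lam / 2) * ‖v‖ ^ 2 - err p :=
  stmt_6_general (hX.starConvex hys) (hf · · ystar hys) hlam hh (isMinOn_iff.2 hysmin) hv herr hp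
end

section
/- Let E be a real inner product space, X ⊆ E a convex set, and f : E → ℝ convex on X. Fix x̂ ∈ E and λ > 0, define h : E → ℝ by h(y) = f(y) + ‖x̂ − y‖²/(2λ), and suppose y* minimizes h over X. If y ∈ X satisfies h(y) − h(y*) ≤ ‖x̂ − y*‖²/(34λ), then ‖x̂ − y*‖ ≤ √2 · ‖x̂ − y‖. -/
/-!
Adding the proximal term makes `h` strongly convex with constant `1/λ`, so it grows quadratically
away from its minimizer: `‖y − y*‖²/(2λ) ≤ h y − h y*`. Since `17 ≥ 4²`, the accuracy hypothesis
gives `‖y − y*‖ ≤ ‖x̂ − y*‖/4`; the triangle inequality then yields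
`‖x̂ − y*‖ ≤ (4/3) ‖x̂ − y‖`, and `4/3 ≤ √2`.
-/

open Filter Topology

section NormedSpace

variable {E : Type*} [NormedAddCommGroup E] [NormedSpace ℝ E] {s : Set E} {g : E → ℝ} {y z : E}

lemma modulus_norm_sub_le_of_uniformConvexOn_of_isMinOn {φ : ℝ → ℝ} (hg : UniformConvexOn s φ g)
    (hz : z ∈ s) (hmin : IsMinOn g s z) (hy : y ∈ s) : φ ‖y - z‖ ≤ g y - g z := by
  have scaled_bound : ∀ t ∈ Set.Ioo (0 : ℝ) 1, t * φ ‖y - z‖ ≤ g y - g z := by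
    rintro t ⟨ht₀, ht₁⟩
    have hmem : (1 - t) • y + t • z ∈ s := hg.1 hy hz (by linarith) ht₀.le (by ring)
    have hconv := hg.2 hy hz (sub_nonneg.2 ht₁.le) ht₀.le (by ring)
    simp only [smul_eq_mul] at hconv
    have hle : g z ≤ (1 - t) * g y + t * g z - (1 - t) * t * φ ‖y - z‖ := (hmin hmem).trans hconv
    refine le_of_mul_le_mul_left ?_ (sub_pos.2 ht₁)
    linarith
  have hlim : Tendsto (fun t : ℝ ↦ t * φ ‖y - z‖) (𝓝[<] 1) (𝓝 (φ ‖y - z‖)) := by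
    have hid : Tendsto (fun t : ℝ ↦ t) (𝓝[<] 1) (𝓝 1) := nhdsWithin_le_nhds
    simpa only [one_mul] using hid.mul_const (φ ‖y - z‖)
  exact le_of_tendsto hlim (eventually_of_mem (Ioo_mem_nhdsLT one_pos) scaled_bound)

lemma norm_sub_le_of_strongConvexOn_of_isMinOn {m r : ℝ} (hg : StrongConvexOn s m g) (hm : 0 < m)
    (hz : z ∈ s) (hmin : IsMinOn g s z) (hy : y ∈ s) (hr : 0 ≤ r)
    (hgap : g y - g z ≤ m / 2 * r ^ 2) : ‖y - z‖ ≤ r := by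
  have hgrowth : m / 2 * ‖y - z‖ ^ 2 ≤ g y - g z :=
    modulus_norm_sub_le_of_uniformConvexOn_of_isMinOn hg hz hmin hy
  have hsq : ‖y - z‖ ^ 2 ≤ r ^ 2 := le_of_mul_le_mul_left (hgrowth.trans hgap) (half_pos hm)
  exact le_of_sq_le_sq hsq hr

lemma one_sub_mul_norm_sub_le_of_strongConvexOn_of_isMinOn {m c : ℝ} (hg : StrongConvexOn s m g)
    (hm : 0 < m) (hz : z ∈ s) (hmin : IsMinOn g s z) (hy : y ∈ s) (hc : 0 ≤ c) (x : E)
    (hgap : g y - g z ≤ m / 2 * (c * ‖x - z‖) ^ 2) : (1 - c) * ‖x - z‖ ≤ ‖x - y‖ := by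
  have hnear : ‖y - z‖ ≤ c * ‖x - z‖ :=
    norm_sub_le_of_strongConvexOn_of_isMinOn hg hm hz hmin hy (by positivity) hgap
  have htri : ‖x - z‖ ≤ ‖x - y‖ + ‖y - z‖ := norm_sub_le_norm_sub_add_norm_sub x y z
  linarith

end NormedSpace

section InnerProductSpace

variable {E : Type*} [NormedAddCommGroup E] [InnerProductSpace ℝ E] {s : Set E}

lemma strongConvexOn_mul_norm_sub_sq (hs : Convex ℝ s) (m : ℝ) (x : E) :
    StrongConvexOn s m fun y ↦ m / 2 * ‖x - y‖ ^ 2 := by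
  have affine_remainder : (fun y ↦ m / 2 * ‖x - y‖ ^ 2 - m / 2 * ‖y‖ ^ 2) =
      fun y ↦ innerₗ E (-m • x) y + m / 2 * ‖x‖ ^ 2 := by
    funext y
    rw [norm_sub_sq_real, innerₗ_apply_apply, real_inner_smul_left]
    ring
  rw [strongConvexOn_iff_convex, affine_remainder]
  exact ((innerₗ E (-m • x)).convexOn hs).add_const _

lemma strongConvexOn_add_mul_norm_sub_sq {f : E → ℝ} (hf : ConvexOn ℝ s f) (m : ℝ) (x : E) :
    StrongConvexOn s m fun y ↦ f y + m / 2 * ‖x - y‖ ^ 2 := by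
  have hadd := hf.uniformConvexOn_zero.add (strongConvexOn_mul_norm_sub_sq hf.1 m x)
  rwa [zero_add] at hadd

end InnerProductSpace

/-- Euclidean instance of the distance comparison in the approximate-proximal lemma:
if `y*` minimizes `h(y) = f(y) + ‖x̂ − y‖²/(2λ)` over the convex set `X` and
`y ∈ X` satisfies `h(y) − h(y*) ≤ ‖x̂ − y*‖²/(34λ)`, then
`‖x̂ − y*‖ ≤ √2 ‖x̂ − y‖`. Here `xh` stands for `x̂`. -/
theorem stmt_7 {E : Type*} [NormedAddCommGroup E] [InnerProductSpace ℝ E]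
    (X : Set E) (hX : Convex ℝ X) (f : E → ℝ)
    (hf : ∀ u ∈ X, ∀ v ∈ X, ∀ t ∈ Set.Icc (0 : ℝ) 1,
      f (t • u + (1 - t) • v) ≤ t * f u + (1 - t) * f v)
    (xh : E) (lam : ℝ) (hlam : 0 < lam)
    (h : E → ℝ) (hh : ∀ y, h y = f y + ‖xh - y‖ ^ 2 / (2 * lam))
    (ystar : E) (hys : ystar ∈ X) (hysmin : ∀ y ∈ X, h ystar ≤ h y)
    (y : E) (hy : y ∈ X)
    (hacc : h y - h ystar ≤ ‖xh - ystar‖ ^ 2 / (34 * lam)) :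
    ‖xh - ystar‖ ≤ Real.sqrt 2 * ‖xh - y‖ := by
  have hfconv : ConvexOn ℝ X f := by
    refine ⟨hX, fun u hu v hv a b ha hb hab ↦ ?_⟩
    obtain rfl : b = 1 - a := eq_sub_of_add_eq' hab
    exact hf u hu v hv a ⟨ha, sub_nonneg.1 hb⟩
  have hstrong : StrongConvexOn X lam⁻¹ h := by
    convert strongConvexOn_add_mul_norm_sub_sq hfconv lam⁻¹ xh using 2 with w
    rw [hh]
    field_simp
  have hgap : h y - h ystar ≤ lam⁻¹ / 2 * (1 / 4 * ‖xh - ystar‖) ^ 2 := calc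
    h y - h ystar ≤ ‖xh - ystar‖ ^ 2 / (34 * lam) := hacc
    _ ≤ ‖xh - ystar‖ ^ 2 / (32 * lam) := by gcongr; norm_num
    _ = lam⁻¹ / 2 * (1 / 4 * ‖xh - ystar‖) ^ 2 := by ring
  have hcompare : (1 - 1 / 4) * ‖xh - ystar‖ ≤ ‖xh - y‖ :=
    one_sub_mul_norm_sub_le_of_strongConvexOn_of_isMinOn hstrong (inv_pos.2 hlam) hys hysmin hy
      (by norm_num) xh hgap
  have hsqrt : (4 / 3 : ℝ) ≤ Real.sqrt 2 := Real.le_sqrt_of_sq_le (by norm_num)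
  calc ‖xh - ystar‖ ≤ 4 / 3 * ‖xh - y‖ := by linarith
    _ ≤ Real.sqrt 2 * ‖xh - y‖ := by gcongr
end

section
/- Let E be a real inner product space, μ > 0, and f : E → ℝ a μ-strongly convex function on E. Let x_g minimize f over E, let c ∈ E and r ≥ 0, and let x* minimize f over the closed ball B̄(c, r) = {y ∈ E : ‖y − c‖ ≤ r}. Then ‖x* − x_g‖ ≤ ‖c − x_g‖. -/
/-!
If `c` were closer to `y` than `x` is, then some point `z` strictly between `x` and `y` would be no
farther from `c` than `x` is, by Stewart's identity. When `x` minimizes a convex function `f` over a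
ball around `c`, this `z` lies in the ball, so `f x ≤ f z`; by convexity that is impossible if
`f y < f x`. Take `y` to be the global minimizer.
-/

open Metric

theorem lt_of_isMinOn_of_strictConvexOn {𝕜 E β : Type*}
    [Field 𝕜] [LinearOrder 𝕜] [IsStrictOrderedRing 𝕜]
    [AddCommMonoid E] [SMul 𝕜 E]
    [AddCommMonoid β] [PartialOrder β] [IsOrderedAddMonoid β] [Module 𝕜 β] [PosSMulMono 𝕜 β]
    {s : Set E} {f : E → β} {x y : E} (hf : StrictConvexOn 𝕜 s f) (hmin : IsMinOn f s x)
    (hx : x ∈ s) (hy : y ∈ s) (hyx : y ≠ x) : f x < f y := by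
  refine (hmin hy).lt_of_ne fun hfxy ↦ hyx ?_
  have hymin : IsMinOn f s y := fun z hz ↦ hfxy.ge.trans (hmin hz)
  exact hf.eq_of_isMinOn hymin hmin hy hx

theorem strongConvexOn_univ_of_forall_mem_Icc {E : Type*} [NormedAddCommGroup E] [NormedSpace ℝ E]
    {f : E → ℝ} {μ : ℝ} (hf : ∀ u v : E, ∀ t ∈ Set.Icc (0 : ℝ) 1,
      f (t • u + (1 - t) • v) ≤ t * f u + (1 - t) * f v - (μ / 2) * t * (1 - t) * ‖u - v‖ ^ 2) :
    StrongConvexOn Set.univ μ f := by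
  refine ⟨convex_univ, fun u _ v _ a b ha hb hab ↦ ?_⟩
  obtain rfl := eq_sub_of_add_eq' hab
  refine (hf u v a ⟨ha, sub_nonneg.1 hb⟩).trans_eq ?_
  simp only [smul_eq_mul]
  ring

section Seminormed

variable {E : Type*} [SeminormedAddCommGroup E] [InnerProductSpace ℝ E]
  {s : Set E} {f : E → ℝ} {c x y xg xstar : E} {r : ℝ}

theorem norm_smul_add_smul_sub_sq (x y c : E) {a b : ℝ} (hab : a + b = 1) :
    ‖a • x + b • y - c‖ ^ 2 = a * ‖x - c‖ ^ 2 + b * ‖y - c‖ ^ 2 - a * b * ‖x - y‖ ^ 2 := by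
  obtain rfl := eq_sub_of_add_eq hab
  have hz : (1 - b) • x + b • y - c = (x - c) - b • (x - y) := by module
  have hy : y - c = (x - c) - (x - y) := by abel
  rw [hz, hy, norm_sub_sq_real (x - c), norm_sub_sq_real (x - c), real_inner_smul_right,
    norm_smul, mul_pow, Real.norm_eq_abs, sq_abs]
  ring

theorem exists_mem_openSegment_norm_sub_le (h : ‖y - c‖ < ‖x - y‖) :
    ∃ z ∈ openSegment ℝ x y, ‖z - c‖ ≤ ‖x - c‖ := by
  have hxy : 0 < ‖x - y‖ ^ 2 := pow_pos ((norm_nonneg _).trans_lt h) 2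
  have hratio : ‖y - c‖ ^ 2 / ‖x - y‖ ^ 2 < 1 := (div_lt_one hxy).2 (by gcongr)
  obtain ⟨a, hratio_a, ha1⟩ := exists_between hratio
  have ha0 : 0 < a := lt_of_le_of_lt (by positivity) hratio_a
  have hb0 : 0 < 1 - a := sub_pos.2 ha1
  have hyc : ‖y - c‖ ^ 2 ≤ a * ‖x - y‖ ^ 2 := ((div_lt_iff₀ hxy).1 hratio_a).le
  refine ⟨a • x + (1 - a) • y, ⟨a, 1 - a, ha0, hb0, by ring, rfl⟩, ?_⟩
  refine le_of_sq_le_sq ?_ (norm_nonneg _)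
  calc ‖a • x + (1 - a) • y - c‖ ^ 2
      = a * ‖x - c‖ ^ 2 + (1 - a) * ‖y - c‖ ^ 2 - a * (1 - a) * ‖x - y‖ ^ 2 :=
        norm_smul_add_smul_sub_sq x y c (by ring)
    _ ≤ a * ‖x - c‖ ^ 2 + (1 - a) * (a * ‖x - y‖ ^ 2) - a * (1 - a) * ‖x - y‖ ^ 2 := by gcongr
    _ = a * ‖x - c‖ ^ 2 := by ring
    _ ≤ ‖x - c‖ ^ 2 := mul_le_of_le_one_left (sq_nonneg _) ha1.le

theorem norm_sub_le_of_isMinOn_inter_closedBall (hf : ConvexOn ℝ s f)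
    (hx : x ∈ s ∩ closedBall c r) (hmin : IsMinOn f (s ∩ closedBall c r) x)
    (hy : y ∈ s) (hyx : f y < f x) : ‖x - y‖ ≤ ‖c - y‖ := by
  by_contra! hyc
  rw [norm_sub_rev c y] at hyc
  obtain ⟨z, hz, hzc⟩ := exists_mem_openSegment_norm_sub_le hyc
  have hzs : z ∈ s := hf.1.openSegment_subset hx.1 hy hz
  have hzball : z ∈ closedBall c r :=
    mem_closedBall_iff_norm.2 (hzc.trans (mem_closedBall_iff_norm.1 hx.2))
  have hxz : f x ≤ f z := hmin ⟨hzs, hzball⟩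
  rw [openSegment_symm] at hz
  exact hxz.not_gt (hf.lt_right_of_left_lt hy hx.1 hz (hyx.trans_le hxz))

theorem stmt_13_general (hf : ConvexOn ℝ s f)
    (hxg : xg ∈ s) (hxgmin : ∀ y ∈ s, y ≠ xg → f xg < f y)
    (hxs : xstar ∈ s ∩ closedBall c r) (hxsmin : IsMinOn f (s ∩ closedBall c r) xstar) :
    ‖xstar - xg‖ ≤ ‖c - xg‖ := by
  rcases eq_or_ne xstar xg with rfl | hne
  · simp
  · exact norm_sub_le_of_isMinOn_inter_closedBall hf hxs hxsmin hxg (hxgmin xstar hxs.1 hne)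

end Seminormed

/-- Euclidean instance: the minimizer `x*` of a `μ`-strongly convex function over a
closed ball is no farther from the global minimizer `x_g` than the center `c` is. -/
theorem stmt_13 {E : Type*} [NormedAddCommGroup E] [InnerProductSpace ℝ E]
    (μ : ℝ) (hμ : 0 < μ) (f : E → ℝ)
    (hsc : ∀ u v : E, ∀ t ∈ Set.Icc (0 : ℝ) 1,
      f (t • u + (1 - t) • v) ≤ t * f u + (1 - t) * f v - (μ / 2) * t * (1 - t) * ‖u - v‖ ^ 2)
    (xg : E) (hxg : ∀ y : E, f xg ≤ f y)
    (c : E) (r : ℝ) (hr : 0 ≤ r)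
    (xstar : E) (hxs : xstar ∈ Metric.closedBall c r)
    (hxsmin : ∀ y ∈ Metric.closedBall c r, f xstar ≤ f y) :
    ‖xstar - xg‖ ≤ ‖c - xg‖ := by
  have hf := (strongConvexOn_univ_of_forall_mem_Icc hsc).strictConvexOn hμ
  exact stmt_13_general hf.convexOn (Set.mem_univ xg)
    (fun y hy ↦ lt_of_isMinOn_of_strictConvexOn hf (fun z _ ↦ hxg z) (Set.mem_univ xg) hy)
    ⟨Set.mem_univ xstar, hxs⟩ (fun y hy ↦ hxsmin y hy.2)
end

section
/- Let E be a real inner product space, X ⊆ E a convex set, and f : E → ℝ differentiable such that for all u, v ∈ E: f(v) ≥ f(u) + ⟨∇f(u), v − u⟩ + (μ/2)‖v − u‖² and f(v) ≤ f(u) + ⟨∇f(u), v − u⟩ + (L/2)‖v − u‖², where 0 < μ ≤ L. Suppose x* ∈ X minimizes f over E. Given x ∈ X, let x̃ = x − (1/L)·∇f(x), and let x⁺ be a metric projection of x̃ onto X. Then ‖x⁺ − x*‖² ≤ (1 − μ/L)·‖x − x*‖². -/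
open RealInnerProductSpace

/-!
The minimizer `x*` lies below the gradient step `x̃`, which smoothness places at least
`‖∇f x‖² / (2L)` below `f x`. Comparing this decrease with the strong convexity lower bound at `x*`
yields `‖∇f x‖² / (2L) + (μ/2)‖x - x*‖² ≤ ⟪∇f x, x - x*⟫`. In the expansion of `‖x̃ - x*‖²` this
inner product absorbs the term `‖∇f x‖² / L²` and leaves the factor `1 - μ/L`. Projecting onto a
convex set containing `x*` does not increase the distance to `x*`, because the angle at the
projection is obtuse.
-/

section

variable {E : Type*} [NormedAddCommGroup E] [InnerProductSpace ℝ E]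

section Projection

variable {K : Set E} {u v w : E}

lemma real_inner_sub_sub_nonpos_of_isMinOn_norm_sub_s16 (hK : Convex ℝ K) (hv : v ∈ K)
    (hmin : IsMinOn (fun y ↦ ‖u - y‖) K v) (hw : w ∈ K) : ⟪u - v, w - v⟫ ≤ 0 :=
  (norm_eq_iInf_iff_real_inner_le_zero hK hv).1 (hmin.iInf_eq hv).symm w hw

lemma norm_sub_sq_add_norm_sub_sq_le_of_real_inner_nonpos (h : ⟪u - v, w - v⟫ ≤ 0) :
    ‖u - v‖ ^ 2 + ‖v - w‖ ^ 2 ≤ ‖u - w‖ ^ 2 := by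
  have cosine_law := norm_sub_sq_real (u - v) (w - v)
  rw [sub_sub_sub_cancel_right, norm_sub_rev w v] at cosine_law
  linarith

lemma norm_sub_sq_le_of_isMinOn_norm_sub (hK : Convex ℝ K) (hv : v ∈ K)
    (hmin : IsMinOn (fun y ↦ ‖u - y‖) K v) (hw : w ∈ K) : ‖v - w‖ ^ 2 ≤ ‖u - w‖ ^ 2 :=
  (le_add_of_nonneg_left (sq_nonneg _)).trans <|
    norm_sub_sq_add_norm_sub_sq_le_of_real_inner_nonpos <|
      real_inner_sub_sub_nonpos_of_isMinOn_norm_sub_s16 hK hv hmin hw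

end Projection

section GradientStep

variable {f : E → ℝ} {x z g : E} {μ L : ℝ}

lemma norm_sub_smul_sub_sq (x z g : E) (η : ℝ) :
    ‖x - η • g - z‖ ^ 2 = ‖x - z‖ ^ 2 - 2 * η * ⟪g, x - z⟫ + η ^ 2 * ‖g‖ ^ 2 := by
  rw [sub_right_comm, norm_sub_sq_real, inner_smul_right, real_inner_comm, norm_smul, mul_pow,
    Real.norm_eq_abs, sq_abs]
  ring

lemma le_sub_norm_sq_div_of_quadratic_upper_bound (hL : L ≠ 0)
    (hupper : f (x - (1 / L) • g) ≤
      f x + ⟪g, x - (1 / L) • g - x⟫ + (L / 2) * ‖x - (1 / L) • g - x‖ ^ 2) :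
    f (x - (1 / L) • g) ≤ f x - ‖g‖ ^ 2 / (2 * L) := by
  refine hupper.trans_eq ?_
  rw [sub_sub_cancel_left, inner_neg_right, inner_smul_right, real_inner_self_eq_norm_sq,
    norm_neg, norm_smul, mul_pow, Real.norm_eq_abs, sq_abs]
  field

lemma norm_sq_div_add_le_real_inner_of_quadratic_lower_bound
    (hlower : f x + ⟪g, z - x⟫ + (μ / 2) * ‖z - x‖ ^ 2 ≤ f z)
    (hdecrease : f z ≤ f x - ‖g‖ ^ 2 / (2 * L)) :
    ‖g‖ ^ 2 / (2 * L) + (μ / 2) * ‖x - z‖ ^ 2 ≤ ⟪g, x - z⟫ := by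
  rw [← neg_sub x z, inner_neg_right, norm_neg] at hlower
  linarith

lemma norm_sub_smul_sub_sq_le_of_le_real_inner (hL : 0 < L)
    (hinner : ‖g‖ ^ 2 / (2 * L) + (μ / 2) * ‖x - z‖ ^ 2 ≤ ⟪g, x - z⟫) :
    ‖x - (1 / L) • g - z‖ ^ 2 ≤ (1 - μ / L) * ‖x - z‖ ^ 2 :=
  calc
    ‖x - (1 / L) • g - z‖ ^ 2
      = ‖x - z‖ ^ 2 - 2 * (1 / L) * ⟪g, x - z⟫ + (1 / L) ^ 2 * ‖g‖ ^ 2 :=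
        norm_sub_smul_sub_sq x z g (1 / L)
    _ ≤ ‖x - z‖ ^ 2 - 2 * (1 / L) * (‖g‖ ^ 2 / (2 * L) + (μ / 2) * ‖x - z‖ ^ 2) +
          (1 / L) ^ 2 * ‖g‖ ^ 2 := by gcongr
    _ = (1 - μ / L) * ‖x - z‖ ^ 2 := by field

end GradientStep

theorem stmt_16_general {X : Set E} (hX : Convex ℝ X) {f : E → ℝ} {x g xstar xplus : E}
    (hgrad : HasFDerivAt f (innerSL ℝ g) x) {μ L : ℝ} (hL : 0 < L)
    (hlower : f x + ⟪g, xstar - x⟫ + (μ / 2) * ‖xstar - x‖ ^ 2 ≤ f xstar)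
    (hupper : f (x - (1 / L) • g) ≤
      f x + ⟪g, x - (1 / L) • g - x⟫ + (L / 2) * ‖x - (1 / L) • g - x‖ ^ 2)
    (hxs : xstar ∈ X) (hle : f xstar ≤ f (x - (1 / L) • g))
    (hxp : xplus ∈ X) (hproj : IsMinOn (fun y ↦ ‖x - (1 / L) • g - y‖) X xplus) :
    ‖xplus - xstar‖ ^ 2 ≤ (1 - μ / L) * ‖x - xstar‖ ^ 2 := by
  have hdecrease : f xstar ≤ f x - ‖g‖ ^ 2 / (2 * L) :=
    hle.trans (le_sub_norm_sq_div_of_quadratic_upper_bound hL.ne' hupper)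
  have hinner := norm_sq_div_add_le_real_inner_of_quadratic_lower_bound hlower hdecrease
  calc
    ‖xplus - xstar‖ ^ 2 ≤ ‖x - (1 / L) • g - xstar‖ ^ 2 :=
      norm_sub_sq_le_of_isMinOn_norm_sub hX hxp hproj hxs
    _ ≤ (1 - μ / L) * ‖x - xstar‖ ^ 2 := norm_sub_smul_sub_sq_le_of_le_real_inner hL hinner

end

/-- Euclidean instance of the one-step contraction of metric-projected gradient descent:
if `f` is `μ`-strongly convex and `L`-smooth on `E` (`0 < μ ≤ L`), `x* ∈ X` minimizes `f`
over `E`, and `x⁺` is the metric projection onto the convex set `X` of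
`x̃ = x − (1/L)∇f(x)` for `x ∈ X`, then `‖x⁺ − x*‖² ≤ (1 − μ/L)‖x − x*‖²`. -/
theorem stmt_16 {E : Type*} [NormedAddCommGroup E] [InnerProductSpace ℝ E]
    (X : Set E) (hX : Convex ℝ X)
    (f : E → ℝ) (f' : E → E) (hdiff : ∀ y, HasFDerivAt f (innerSL ℝ (f' y)) y)
    (μ L : ℝ) (hμ : 0 < μ) (hμL : μ ≤ L)
    (hsc : ∀ u v : E, f v ≥ f u + ⟪f' u, v - u⟫ + (μ / 2) * ‖v - u‖ ^ 2)
    (hsm : ∀ u v : E, f v ≤ f u + ⟪f' u, v - u⟫ + (L / 2) * ‖v - u‖ ^ 2)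
    (xstar : E) (hxs : xstar ∈ X) (hxsmin : ∀ y : E, f xstar ≤ f y)
    (x : E) (hx : x ∈ X)
    (xtilde : E) (hxt : xtilde = x - (1 / L) • f' x)
    (xplus : E) (hxpX : xplus ∈ X) (hxpproj : ∀ y ∈ X, ‖xtilde - xplus‖ ≤ ‖xtilde - y‖) :
    ‖xplus - xstar‖ ^ 2 ≤ (1 - μ / L) * ‖x - xstar‖ ^ 2 := by
  subst hxt
  exact stmt_16_general hX (hdiff x) (hμ.trans_le hμL) (hsc x xstar) (hsm x _) hxs (hxsmin _)
    hxpX (isMinOn_iff.2 hxpproj)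
end

section
/- Let E be a real inner product space and f : E → ℝ a function convex on E, with x_g a minimizer of f over E. Let R > 0 and D ∈ (0, 4R], let x ∈ E satisfy ‖x − x_g‖ ≤ 2R, let ε ≥ 0, and suppose x⁺ ∈ E satisfies f(x⁺) ≤ f(y) + ε for every y in the closed ball B̄(x, D/2) = {y ∈ E : ‖y − x‖ ≤ D/2}. Then f(x⁺) − f(x_g) ≤ (1 − D/(4R))·(f(x) − f(x_g)) + ε. -/
section

open AffineMap Metric Set

section OrderedRing

variable {𝕜 E β : Type*} [Ring 𝕜] [PartialOrder 𝕜] [IsOrderedRing 𝕜] [AddCommGroup E] [Module 𝕜 E]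
  [AddCommGroup β] [PartialOrder β] [Module 𝕜 β] {s : Set E} {f : E → β}

theorem convexOn_of_forall_mem_Icc_s18 (hs : Convex 𝕜 s)
    (hf : ∀ u ∈ s, ∀ v ∈ s, ∀ t ∈ Icc (0 : 𝕜) 1,
      f (t • u + (1 - t) • v) ≤ t • f u + (1 - t) • f v) :
    ConvexOn 𝕜 s f := by
  refine ⟨hs, fun u hu v hv a b ha hb hab ↦ ?_⟩
  obtain rfl : b = 1 - a := eq_sub_of_add_eq' hab
  exact hf u hu v hv a ⟨ha, sub_nonneg.mp hb⟩

theorem convexOn_map_lineMap_le (hf : ConvexOn 𝕜 s f) {x z : E} (hx : x ∈ s) (hz : z ∈ s)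
    {t : 𝕜} (ht : t ∈ Icc (0 : 𝕜) 1) : f (lineMap x z t) ≤ lineMap (f x) (f z) t := by
  rw [lineMap_apply_module, lineMap_apply_module]
  exact hf.2 hx hz (sub_nonneg.mpr ht.2) ht.1 (sub_add_cancel 1 t)

end OrderedRing

variable {E : Type*} [SeminormedAddCommGroup E] [NormedSpace ℝ E] {s : Set E} {x z p : E}

theorem lineMap_mem_closedBall_left {t r : ℝ} (ht : 0 ≤ t) (hr : t * dist x z ≤ r) :
    lineMap x z t ∈ closedBall x r := by
  rwa [mem_closedBall, dist_lineMap_left, Real.norm_of_nonneg ht]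

theorem le_lineMap_add_of_forall_mem_closedBall {β : Type*} [AddCommGroup β] [PartialOrder β]
    [IsOrderedAddMonoid β] [Module ℝ β] {f : E → β} {ε : β} {t r : ℝ} (hf : ConvexOn ℝ s f)
    (hx : x ∈ s) (hz : z ∈ s) (ht : t ∈ Icc (0 : ℝ) 1) (hr : t * dist x z ≤ r)
    (hp : ∀ y ∈ s ∩ closedBall x r, f p ≤ f y + ε) :
    f p ≤ lineMap (f x) (f z) t + ε :=
  calc f p ≤ f (lineMap x z t) + ε :=
        hp _ ⟨hf.1.lineMap_mem hx hz ht, lineMap_mem_closedBall_left ht.1 hr⟩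
    _ ≤ lineMap (f x) (f z) t + ε := by
        gcongr
        exact convexOn_map_lineMap_le hf hx hz ht

theorem stmt_18_general {f : E → ℝ} {ε R D : ℝ} (hf : ConvexOn ℝ s f) (hx : x ∈ s) (hz : z ∈ s)
    (hR : 0 < R) (hD0 : 0 ≤ D) (hD : D ≤ 4 * R) (hxz : ‖x - z‖ ≤ 2 * R)
    (hp : ∀ y ∈ s ∩ closedBall x (D / 2), f p ≤ f y + ε) :
    f p - f z ≤ (1 - D / (4 * R)) * (f x - f z) + ε := by
  -- `D / (4 * R)` is the ratio of the radius `D / 2` to the bound `2 * R` on `‖x - z‖`.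
  have ratio_mem : D / (4 * R) ∈ Icc (0 : ℝ) 1 :=
    ⟨by positivity, div_le_one_of_le₀ hD (by positivity)⟩
  have ratio_mul_dist_le : D / (4 * R) * dist x z ≤ D / 2 :=
    calc D / (4 * R) * dist x z ≤ D / (4 * R) * (2 * R) := by
          rw [dist_eq_norm]; gcongr
      _ = D / 2 := by field_simp; norm_num
  have le_segment : f p ≤ (1 - D / (4 * R)) * f x + D / (4 * R) * f z + ε := by
    simpa only [lineMap_apply_module, smul_eq_mul] using
      le_lineMap_add_of_forall_mem_closedBall hf hx hz ratio_mem ratio_mul_dist_le hp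
  linarith

end

/-- Euclidean instance of the one-ball progress step of boosted Riemacon: if `f` is
convex on `E` with global minimizer `x_g`, `‖x − x_g‖ ≤ 2R`, `0 < D ≤ 4R`, and `x⁺`
is an `ε`-minimizer of `f` over the closed ball `B̄(x, D/2)`, then
`f(x⁺) − f(x_g) ≤ (1 − D/(4R))(f(x) − f(x_g)) + ε`. -/
theorem stmt_18 {E : Type*} [NormedAddCommGroup E] [InnerProductSpace ℝ E]
    (f : E → ℝ)
    (hf : ∀ u v : E, ∀ t ∈ Set.Icc (0 : ℝ) 1,
      f (t • u + (1 - t) • v) ≤ t * f u + (1 - t) * f v)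
    (xg : E) (hxg : ∀ y : E, f xg ≤ f y)
    (R D : ℝ) (hR : 0 < R) (hD0 : 0 < D) (hD : D ≤ 4 * R)
    (x : E) (hx : ‖x - xg‖ ≤ 2 * R)
    (ε : ℝ) (hε : 0 ≤ ε)
    (xplus : E) (hxplus : ∀ y ∈ Metric.closedBall x (D / 2), f xplus ≤ f y + ε) :
    f xplus - f xg ≤ (1 - D / (4 * R)) * (f x - f xg) + ε := by
  have convexOn_f : ConvexOn ℝ Set.univ f :=
    convexOn_of_forall_mem_Icc_s18 convex_univ fun u _ v _ ↦ hf u v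
  exact stmt_18_general convexOn_f trivial trivial hR hD0.le hD hx fun y hy ↦ hxplus y hy.2
end
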